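/- arXiv:2402.11524 — 2 statements merged into one kernel-verified Lean document; each statement's English description precedes it below -/
import Mathlib

section
/- Let s < T, let X₁,…,X_m : ℝ^d → ℝ^d be C^∞ vector fields with vanishing Euclidean divergence, and let β : [s,T]×ℝ^d → ℝ^m be continuous, continuously differentiable in the space variable, with sup_{[s,T]×ℝ^d} |β| < ∞. Suppose ρ : [s,T]×ℝ^d → ℝ is continuous, continuously differentiable in t and twice continuously differentiable in y on (s,T]×ℝ^d, there is a compact set K ⊂ ℝ^d such that ρ(t,·) is supported in K for every t ∈ [s,T], ρ solves the Fokker–Planck equation ∂_tρ(t,y) = Δ_Gρ(t,·)(y) + div_G(β(t,·)ρ(t,·))(y) for all (t,y) ∈ (s,T]×ℝ^d, and ρ(s,·) ≡ 0. Then ρ(t,y) = 0 for all (t,y) ∈ [s,T]×ℝ^d. -/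
/-!
The proof is an energy estimate. Put `E t = ∫ ρ(t, y)² dy`. Since the fields `X i` are divergence
free, `X i` is formally skew-adjoint on compactly supported functions
(`integral_mul_dirDeriv`), so with `a i = X i ρ` the equation gives
`E' = 2 ∫ ρ ∑ i, X i (a i + β i ρ) = -2 ∑ i, ∫ a i (a i + β i ρ) ≤ ∫ |β|² ρ² ≤ M² E`,
where the dissipation term absorbs the drift by Young's inequality (`energy_inequality`); no bound
on the derivatives of `β` is needed. As `E` is continuous on `[s, T]` with `E s = 0` and is
differentiable on `(s, T)` (`hasDerivAt_energy`), the function `exp (-M² t) E t` is nonincreasing,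
hence `E = 0`, and `ρ = 0` by continuity.
-/

open MeasureTheory Set

/-- Directional derivative of `f` along the vector field `V` at `x`. -/
noncomputable def dirDeriv {d : ℕ} (V : (Fin d → ℝ) → (Fin d → ℝ))
    (f : (Fin d → ℝ) → ℝ) (x : Fin d → ℝ) : ℝ :=
  fderiv ℝ f x (V x)

/-- Euclidean divergence of a vector field on `ℝ^d`. -/
noncomputable def divE {d : ℕ} (V : (Fin d → ℝ) → (Fin d → ℝ)) (x : Fin d → ℝ) : ℝ :=
  ∑ k, fderiv ℝ (fun y => V y k) x (Pi.single k 1)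

/-- Horizontal Laplacian `Δ_G f = Σᵢ Xᵢ(Xᵢ f)`. -/
noncomputable def deltaG {d m : ℕ} (X : Fin m → (Fin d → ℝ) → (Fin d → ℝ))
    (f : (Fin d → ℝ) → ℝ) (x : Fin d → ℝ) : ℝ :=
  ∑ i, dirDeriv (X i) (dirDeriv (X i) f) x

/-- Horizontal divergence `div_G v = Σᵢ Xᵢ vᵢ`. -/
noncomputable def divG {d m : ℕ} (X : Fin m → (Fin d → ℝ) → (Fin d → ℝ))
    (v : (Fin d → ℝ) → Fin m → ℝ) (x : Fin d → ℝ) : ℝ :=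
  ∑ i, dirDeriv (X i) (fun y => v y i) x

/-- Euclidean norm on `ℝ^m`. -/
noncomputable def euclNorm {m : ℕ} (v : Fin m → ℝ) : ℝ :=
  Real.sqrt (∑ i, v i ^ 2)

lemma dirDeriv_eq_sum {d : ℕ} (V : (Fin d → ℝ) → (Fin d → ℝ)) (f : (Fin d → ℝ) → ℝ)
    (x : Fin d → ℝ) :
    dirDeriv V f x = ∑ k, V x k * fderiv ℝ f x (Pi.single k 1) := by
  unfold dirDeriv
  conv_lhs => rw [pi_eq_sum_univ' (V x)]
  simp [map_sum]

lemma contDiff_dirDeriv {d : ℕ} {V : (Fin d → ℝ) → (Fin d → ℝ)} {f : (Fin d → ℝ) → ℝ}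
    (hV : ContDiff ℝ 1 V) (hf : ContDiff ℝ 2 f) : ContDiff ℝ 1 (dirDeriv V f) :=
  (hf.fderiv_right (m := 1) (by norm_num)).clm_apply hV

lemma continuous_dirDeriv {d : ℕ} {V : (Fin d → ℝ) → (Fin d → ℝ)} {f : (Fin d → ℝ) → ℝ}
    (hV : Continuous V) (hf : ContDiff ℝ 1 f) : Continuous (dirDeriv V f) :=
  (hf.continuous_fderiv (by norm_num)).clm_apply hV

lemma hasCompactSupport_dirDeriv {d : ℕ} (V : (Fin d → ℝ) → (Fin d → ℝ))
    {f : (Fin d → ℝ) → ℝ} (hf : HasCompactSupport f) : HasCompactSupport (dirDeriv V f) := by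
  refine (hf.fderiv (𝕜 := ℝ)).mono ?_
  intro x hx hx'
  exact hx (by simp [dirDeriv, hx'])

lemma dirDeriv_mul {d : ℕ} (V : (Fin d → ℝ) → (Fin d → ℝ)) {f g : (Fin d → ℝ) → ℝ}
    (hf : ContDiff ℝ 1 f) (hg : ContDiff ℝ 1 g) (x : Fin d → ℝ) :
    dirDeriv V (fun y => f y * g y) x = f x * dirDeriv V g x + dirDeriv V f x * g x := by
  unfold dirDeriv
  rw [fderiv_fun_mul (hf.differentiable (by norm_num) x) (hg.differentiable (by norm_num) x)]
  simp [mul_comm]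

lemma integral_dirDeriv_eq_zero {d : ℕ} {V : (Fin d → ℝ) → (Fin d → ℝ)}
    (hV : ContDiff ℝ 1 V) (hdiv : ∀ x, divE V x = 0) {f : (Fin d → ℝ) → ℝ}
    (hf : ContDiff ℝ 1 f) (hfc : HasCompactSupport f) :
    ∫ x, dirDeriv V f x = 0 := by
  have hVk : ∀ k, ContDiff ℝ 1 (fun y => V y k) := fun k => contDiff_pi.1 hV k
  have hV' : ∀ k, Continuous (fun x => fderiv ℝ (fun y => V y k) x (Pi.single k 1)) := fun k =>
    ((hVk k).continuous_fderiv (by norm_num)).clm_apply continuous_const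
  have hf' : ∀ k : Fin d, Continuous (fun x => fderiv ℝ f x (Pi.single k 1)) := fun k =>
    (hf.continuous_fderiv (by norm_num)).clm_apply continuous_const
  have hfc' : ∀ k : Fin d, HasCompactSupport (fun x => fderiv ℝ f x (Pi.single k 1)) := fun k =>
    hfc.fderiv_apply ℝ _
  have i1 : ∀ k, Integrable (fun x => V x k * fderiv ℝ f x (Pi.single k 1)) := fun k =>
    ((hVk k).continuous.mul (hf' k)).integrable_of_hasCompactSupport ((hfc' k).mul_left)
  have i2 : ∀ k, Integrable (fun x => fderiv ℝ (fun y => V y k) x (Pi.single k 1) * f x) :=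
    fun k => ((hV' k).mul hf.continuous).integrable_of_hasCompactSupport hfc.mul_left
  have i3 : ∀ k, Integrable (fun x => V x k * f x) := fun k =>
    ((hVk k).continuous.mul hf.continuous).integrable_of_hasCompactSupport hfc.mul_left
  simp_rw [dirDeriv_eq_sum]
  rw [integral_finsetSum _ fun k _ => i1 k]
  simp_rw [fun k => integral_mul_fderiv_eq_neg_fderiv_mul_of_integrable (i2 k) (i1 k) (i3 k)
    (fun x _ => (hVk k).differentiable (by norm_num) x)
    (fun x _ => hf.differentiable (by norm_num) x)]
  rw [Finset.sum_neg_distrib, ← integral_finsetSum _ fun k _ => i2 k]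
  simp_rw [← Finset.sum_mul]
  have : ∀ x, ∑ k, fderiv ℝ (fun y => V y k) x (Pi.single k 1) = 0 := hdiv
  simp [this]

/-- Integration by parts along a divergence-free field. -/
lemma integral_mul_dirDeriv {d : ℕ} {V : (Fin d → ℝ) → (Fin d → ℝ)}
    (hV : ContDiff ℝ 1 V) (hdiv : ∀ x, divE V x = 0) {f g : (Fin d → ℝ) → ℝ}
    (hf : ContDiff ℝ 1 f) (hfc : HasCompactSupport f) (hg : ContDiff ℝ 1 g) :
    ∫ x, f x * dirDeriv V g x = -∫ x, dirDeriv V f x * g x := by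
  have h := integral_dirDeriv_eq_zero hV hdiv (hf.mul hg) hfc.mul_right
  simp_rw [dirDeriv_mul V hf hg] at h
  rw [integral_add] at h
  · linarith
  · exact (hf.continuous.mul (continuous_dirDeriv hV.continuous hg)).integrable_of_hasCompactSupport
      hfc.mul_right
  · exact ((continuous_dirDeriv hV.continuous hf).mul hg.continuous).integrable_of_hasCompactSupport
      (hasCompactSupport_dirDeriv V hfc).mul_right

/-- The spatial operator applied to `u` is `∑ i, X i (X i u + b i u)`. -/
lemma deltaG_add_divG {d m : ℕ} {X : Fin m → (Fin d → ℝ) → (Fin d → ℝ)}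
    (hX : ∀ i, ContDiff ℝ 1 (X i)) {u : (Fin d → ℝ) → ℝ} (hu : ContDiff ℝ 2 u)
    {b : (Fin d → ℝ) → Fin m → ℝ} (hb : ContDiff ℝ 1 b) (x : Fin d → ℝ) :
    deltaG X u x + divG X (fun z i => b z i * u z) x
      = ∑ i, dirDeriv (X i) (fun y => dirDeriv (X i) u y + b y i * u y) x := by
  unfold deltaG divG
  rw [← Finset.sum_add_distrib]
  refine Finset.sum_congr rfl fun i _ => ?_
  have h1 := (contDiff_dirDeriv (hX i) hu).differentiable (by norm_num) x
  have h2 : DifferentiableAt ℝ (fun y => b y i * u y) x :=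
    ((contDiff_pi.1 hb i).mul (hu.of_le (by norm_num))).differentiable (by norm_num) x
  conv_rhs => rw [dirDeriv, fderiv_fun_add h1 h2]
  rfl

/-- The energy estimate at a fixed time. -/
lemma energy_inequality {d m : ℕ} {X : Fin m → (Fin d → ℝ) → (Fin d → ℝ)}
    (hX : ∀ i, ContDiff ℝ 1 (X i)) (hdiv : ∀ i x, divE (X i) x = 0)
    {u : (Fin d → ℝ) → ℝ} (hu : ContDiff ℝ 2 u) (huc : HasCompactSupport u)
    {b : (Fin d → ℝ) → Fin m → ℝ} (hb : ContDiff ℝ 1 b) {M : ℝ}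
    (hM : ∀ y, ∑ i, b y i ^ 2 ≤ M ^ 2) :
    ∫ x, 2 * u x * (deltaG X u x + divG X (fun z i => b z i * u z) x)
      ≤ M ^ 2 * ∫ x, u x ^ 2 := by
  have hu1 : ContDiff ℝ 1 u := hu.of_le (by norm_num)
  have hw : ∀ i, ContDiff ℝ 1 (fun y => dirDeriv (X i) u y + b y i * u y) := fun i =>
    (contDiff_dirDeriv (hX i) hu).add ((contDiff_pi.1 hb i).mul hu1)
  have i1 : ∀ i, Integrable
      (fun x => u x * dirDeriv (X i) (fun y => dirDeriv (X i) u y + b y i * u y) x) := fun i =>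
    (hu.continuous.mul (continuous_dirDeriv (hX i).continuous (hw i))).integrable_of_hasCompactSupport
      huc.mul_right
  have i2 : ∀ i, Integrable
      (fun x => dirDeriv (X i) u x * (dirDeriv (X i) u x + b x i * u x)) := fun i =>
    ((continuous_dirDeriv (hX i).continuous hu1).mul
      (hw i).continuous).integrable_of_hasCompactSupport
      (hasCompactSupport_dirDeriv (X i) huc).mul_right
  have i3 : Integrable (fun x => u x ^ 2) := by
    simp_rw [pow_two]
    exact (hu.continuous.mul hu.continuous).integrable_of_hasCompactSupport huc.mul_right
  have key : ∫ x, 2 * u x * (deltaG X u x + divG X (fun z i => b z i * u z) x)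
      = ∫ x, -2 * ∑ i, dirDeriv (X i) u x * (dirDeriv (X i) u x + b x i * u x) := by
    have hpt : ∀ x, 2 * u x * (deltaG X u x + divG X (fun z i => b z i * u z) x)
        = 2 * ∑ i, u x * dirDeriv (X i) (fun y => dirDeriv (X i) u y + b y i * u y) x := fun x => by
      rw [deltaG_add_divG hX hu hb, mul_assoc, Finset.mul_sum]
    simp_rw [hpt]
    rw [integral_const_mul, integral_const_mul, integral_finsetSum _ fun i _ => i1 i,
      integral_finsetSum _ fun i _ => i2 i]
    simp_rw [fun i => integral_mul_dirDeriv (hX i) (hdiv i) hu1 huc (hw i)]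
    rw [Finset.sum_neg_distrib]
    ring
  rw [key, ← integral_const_mul]
  refine integral_mono ((integrable_finsetSum _ fun i _ => i2 i).const_mul _)
    (i3.const_mul _) fun x => ?_
  -- Young: `-2 a (a + c u) ≤ c² u²`, summed over the components.
  have h1 : -2 * ∑ i, dirDeriv (X i) u x * (dirDeriv (X i) u x + b x i * u x)
      ≤ ∑ i, b x i ^ 2 * u x ^ 2 := by
    rw [Finset.mul_sum]
    refine Finset.sum_le_sum fun i _ => ?_
    nlinarith [sq_nonneg (dirDeriv (X i) u x + b x i * u x), sq_nonneg (dirDeriv (X i) u x)]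
  rw [← Finset.sum_mul] at h1
  exact h1.trans (mul_le_mul_of_nonneg_right (hM x) (sq_nonneg _))

/-- Differentiation of the energy under the integral sign. -/
lemma hasDerivAt_energy {d : ℕ} {s T : ℝ} {ρ r : ℝ → (Fin d → ℝ) → ℝ}
    (hρcont : ContinuousOn (fun p : ℝ × (Fin d → ℝ) => ρ p.1 p.2) (Ioo s T ×ˢ univ))
    (hrcont : ContinuousOn (fun p : ℝ × (Fin d → ℝ) => r p.1 p.2) (Ioo s T ×ˢ univ))
    {K : Set (Fin d → ℝ)} (hK : IsCompact K)
    (hsupp : ∀ t ∈ Ioo s T, ∀ y ∉ K, ρ t y = 0)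
    (hr : ∀ t ∈ Ioo s T, ∀ y, HasDerivAt (fun τ => ρ τ y) (r t y) t)
    {t : ℝ} (ht : t ∈ Ioo s T) :
    HasDerivAt (fun τ => ∫ y, ρ τ y ^ 2) (∫ y, 2 * ρ t y * r t y) t := by
  obtain ⟨ε, hε, hball⟩ := Metric.nhds_basis_closedBall.mem_iff.1 (Ioo_mem_nhds ht.1 ht.2)
  have slice : ∀ {g : ℝ → (Fin d → ℝ) → ℝ},
      ContinuousOn (fun p : ℝ × (Fin d → ℝ) => g p.1 p.2) (Ioo s T ×ˢ univ) →
      ∀ τ ∈ Ioo s T, Continuous (g τ) := fun hg τ hτ =>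
    hg.comp_continuous (f := fun y : Fin d → ℝ => (τ, y)) (by fun_prop) fun y => ⟨hτ, mem_univ y⟩
  have hF' : ContinuousOn (fun p : ℝ × (Fin d → ℝ) => 2 * ρ p.1 p.2 * r p.1 p.2)
      (Metric.closedBall t ε ×ˢ K) :=
    ((continuousOn_const.mul hρcont).mul hrcont).mono (prod_mono hball (subset_univ K))
  obtain ⟨C, hC⟩ := ((isCompact_closedBall t ε).prod hK).exists_bound_of_continuousOn hF'
  refine (hasDerivAt_integral_of_dominated_loc_of_deriv_le
    (F := fun τ y => ρ τ y ^ 2) (F' := fun τ y => 2 * ρ τ y * r τ y)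
    (bound := K.indicator fun _ => C) (Metric.closedBall_mem_nhds t hε) ?_ ?_ ?_ ?_ ?_ ?_).2
  · filter_upwards [Ioo_mem_nhds ht.1 ht.2] with τ hτ
    exact ((slice hρcont τ hτ).pow 2).aestronglyMeasurable
  · exact ((slice hρcont t ht).pow 2).integrable_of_hasCompactSupport
      (HasCompactSupport.intro hK fun y hy => by simp [hsupp t ht y hy])
  · exact ((continuous_const.mul (slice hρcont t ht)).mul (slice hrcont t ht)).aestronglyMeasurable
  · refine Filter.Eventually.of_forall fun y τ hτ => ?_
    by_cases hy : y ∈ K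
    · simpa [hy] using hC (τ, y) ⟨hτ, hy⟩
    · simp [hy, hsupp τ (hball hτ) y hy]
  · exact (integrable_indicator_iff hK.measurableSet).2 (integrableOn_const hK.measure_ne_top)
  · refine Filter.Eventually.of_forall fun y τ hτ => ?_
    simpa using (hr τ (hball hτ) y).fun_pow 2

/-- Uniqueness (vanishing) for compactly supported classical solutions of the subelliptic
Fokker-Planck equation with zero initial datum. -/
theorem fokker_planck_uniqueness
    {d m : ℕ} (hd : 1 ≤ d) (hm : 1 ≤ m)
    (X : Fin m → (Fin d → ℝ) → (Fin d → ℝ))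
    (hXsmooth : ∀ i, ContDiff ℝ (⊤ : ℕ∞) (X i))
    (hXdiv : ∀ i x, divE (X i) x = 0)
    (s T : ℝ) (hsT : s < T)
    (β : ℝ → (Fin d → ℝ) → Fin m → ℝ)
    (hβcont : ContinuousOn (fun p : ℝ × (Fin d → ℝ) => β p.1 p.2) (Icc s T ×ˢ univ))
    (hβC1 : ∀ t ∈ Icc s T, ContDiff ℝ 1 (fun y => β t y))
    (hβbdd : ∃ M : ℝ, ∀ t ∈ Icc s T, ∀ y, euclNorm (β t y) ≤ M)
    (ρ : ℝ → (Fin d → ℝ) → ℝ)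
    (hρcont : ContinuousOn (fun p : ℝ × (Fin d → ℝ) => ρ p.1 p.2) (Icc s T ×ˢ univ))
    (hρC2 : ∀ t ∈ Ioc s T, ContDiff ℝ 2 (ρ t))
    (hρtC : ContinuousOn (fun p : ℝ × (Fin d → ℝ) => deriv (fun τ => ρ τ p.2) p.1)
      (Ioc s T ×ˢ univ))
    (K : Set (Fin d → ℝ)) (hK : IsCompact K)
    (hsupp : ∀ t ∈ Icc s T, ∀ y ∉ K, ρ t y = 0)
    (hpde : ∀ t ∈ Ioc s T, ∀ y, HasDerivAt (fun τ => ρ τ y)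
      (deltaG X (ρ t) y + divG X (fun z i => β t z i * ρ t z) y) t)
    (hinit : ∀ y, ρ s y = 0) :
    ∀ t ∈ Icc s T, ∀ y, ρ t y = 0 := by
  obtain ⟨M, hM⟩ := hβbdd
  have hX1 : ∀ i, ContDiff ℝ 1 (X i) := fun i => (hXsmooth i).of_le (by exact_mod_cast le_top)
  have hM2 : ∀ t ∈ Icc s T, ∀ y, ∑ i, β t y i ^ 2 ≤ M ^ 2 := fun t ht y =>
    (Real.sqrt_le_iff.1 (hM t ht y)).2
  have hcs : ∀ t ∈ Icc s T, HasCompactSupport (ρ t) := fun t ht =>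
    HasCompactSupport.intro hK (hsupp t ht)
  have hE' : ∀ t ∈ Ioo s T, HasDerivAt (fun τ => ∫ y, ρ τ y ^ 2)
      (∫ y, 2 * ρ t y * (deltaG X (ρ t) y + divG X (fun z i => β t z i * ρ t z) y)) t := by
    intro t ht
    refine hasDerivAt_energy
      (r := fun t y => deltaG X (ρ t) y + divG X (fun z i => β t z i * ρ t z) y)
      (hρcont.mono (prod_mono Ioo_subset_Icc_self subset_rfl)) ?_ hK
      (fun t ht => hsupp t (Ioo_subset_Icc_self ht))
      (fun t ht => hpde t (Ioo_subset_Ioc_self ht)) ht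
    refine (hρtC.mono (prod_mono Ioo_subset_Ioc_self subset_rfl)).congr fun p hp => ?_
    exact (hpde p.1 (Ioo_subset_Ioc_self hp.1) p.2).deriv.symm
  have hEc : ContinuousOn (fun τ => ∫ y, ρ τ y ^ 2) (Icc s T) :=
    continuousOn_integral_of_compact_support hK (hρcont.pow 2)
      fun t y ht hy => by simp [hsupp t ht y hy]
  have hF' : ∀ t ∈ Ioo s T, HasDerivAt (fun τ => Real.exp (-M ^ 2 * τ) * ∫ y, ρ τ y ^ 2)
      (Real.exp (-M ^ 2 * t) * (-M ^ 2) * (∫ y, ρ t y ^ 2) + Real.exp (-M ^ 2 * t) *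
        ∫ y, 2 * ρ t y * (deltaG X (ρ t) y + divG X (fun z i => β t z i * ρ t z) y)) t := by
    intro t ht
    have h := ((hasDerivAt_id t).const_mul (-M ^ 2)).exp
    simp only [id, mul_one] at h
    exact h.mul (hE' t ht)
  have hanti : AntitoneOn (fun τ => Real.exp (-M ^ 2 * τ) * ∫ y, ρ τ y ^ 2) (Icc s T) := by
    refine antitoneOn_of_deriv_nonpos (convex_Icc s T)
      (ContinuousOn.mul (by fun_prop) hEc) ?_ ?_
    · rw [interior_Icc]
      exact fun t ht => (hF' t ht).differentiableAt.differentiableWithinAt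
    · rw [interior_Icc]
      intro t ht
      have hIcc := Ioo_subset_Icc_self ht
      have hen := energy_inequality hX1 hXdiv (hρC2 t (Ioo_subset_Ioc_self ht)) (hcs t hIcc)
        (hβC1 t hIcc) (hM2 t hIcc)
      rw [(hF' t ht).deriv]
      nlinarith [mul_le_mul_of_nonneg_left hen (Real.exp_pos (-M ^ 2 * t)).le]
  intro t ht y
  by_contra hy
  have hcont : Continuous (ρ t) :=
    hρcont.comp_continuous (f := fun y : Fin d → ℝ => (t, y)) (by fun_prop)
      fun y => ⟨ht, mem_univ y⟩
  have hpos : 0 < ∫ y, ρ t y ^ 2 :=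
    (hcont.pow 2).integral_pos_of_hasCompactSupport_nonneg_nonzero (x := y)
      (HasCompactSupport.intro hK fun y hy => by simp [hsupp t ht y hy])
      (fun y => sq_nonneg _) (pow_ne_zero 2 hy)
  have hle := hanti (left_mem_Icc.2 hsT.le) ht ht.1
  have hs0 : ∫ y, ρ s y ^ 2 = 0 := by simp [hinit]
  simp only [hs0, mul_zero] at hle
  exact hle.not_gt (mul_pos (Real.exp_pos _) hpos)
end

section
/- Let s < T, let X₁,…,X_m : ℝ^d → ℝ^d be C^∞ vector fields with vanishing Euclidean divergence, and let β : [s,T]×ℝ^d → ℝ^m be continuous, continuously differentiable in the space variable, with sup_{t∈[s,T]} sup_{y∈ℝ^d} |div_G β(t,·)(y)| < ∞, where div_G β(t,·) = Σᵢ Xᵢβᵢ(t,·). Suppose ρ : [s,T]×ℝ^d → ℝ is continuous, continuously differentiable in t and twice continuously differentiable in y on (s,T]×ℝ^d, there is a compact set K ⊂ ℝ^d such that ρ(t,·) is supported in K for every t ∈ [s,T], ρ solves ∂_tρ(t,y) = Δ_Gρ(t,·)(y) + div_G(β(t,·)ρ(t,·))(y) on (s,T]×ℝ^d, and ρ(s,·)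 ≥ 0. Then ρ(t,y) ≥ 0 for all (t,y) ∈ [s,T]×ℝ^d. -/
/-!
The proof is the weak maximum principle. With `|div_G β| ≤ C`, put `u t y = exp (-(C + 1) t) ρ t y`.
If `ρ` is negative somewhere, `u` attains a negative minimum over the compact set `[s, T] × K` at some
`(t₁, y₁)`; here `t₁ > s` because `ρ s ≥ 0`, and `y₁` is a global minimum of `ρ t₁` because `ρ t₁`
vanishes off `K`. At that point the gradient of `ρ t₁` is zero and `Δ_G ρ ≥ 0`
(`dirDeriv_dirDeriv_nonneg`), so the equation reads `∂ₜρ = Δ_G ρ + ρ div_G β`. Minimality in time over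
`[s, t₁]` gives `∂ₜρ - (C + 1) ρ ≤ 0` (`deriv_nonpos_of_left_min`), contradicting
`Δ_G ρ + ρ (div_G β - (C + 1)) > 0`.
Only the local form of the equation at one point is used, so no ellipticity of `Δ_G` is needed.
-/

open MeasureTheory Set

/-- Second-order necessary condition at a minimum on the line: were `h''(x) < 0`, the point would
also be a local maximum, so `h` would be locally constant. -/
lemma deriv_deriv_nonneg_of_isLocalMin {h : ℝ → ℝ} {x : ℝ} (hc : ContinuousAt h x)
    (hmin : IsLocalMin h x) : 0 ≤ deriv (deriv h) x := by
  by_contra! hneg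
  have hmax : IsLocalMax h x := isLocalMax_of_deriv_deriv_neg hneg hmin.deriv_eq_zero hc
  have hconst : h =ᶠ[nhds x] fun _ => h x := by
    filter_upwards [hmin, hmax] with y h1 h2
    exact le_antisymm h2 h1
  have h2 : deriv (deriv h) x = 0 := by
    rw [hconst.deriv.deriv_eq]
    simp
  linarith

/-- At a global minimum of `f` the first-order part of `V(Vf)` drops out, leaving the Hessian of `f`
evaluated on `V x` twice. -/
lemma dirDeriv_dirDeriv_nonneg {d : ℕ} {V : (Fin d → ℝ) → (Fin d → ℝ)} {f : (Fin d → ℝ) → ℝ}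
    {x : Fin d → ℝ} (hV : DifferentiableAt ℝ V x) (hf : ContDiff ℝ 2 f) (hmin : ∀ y, f x ≤ f y) :
    0 ≤ dirDeriv V (dirDeriv V f) x := by
  have hlm : IsLocalMin f x := Filter.Eventually.of_forall hmin
  have hf1 : Differentiable ℝ f := hf.differentiable (by norm_num)
  have hf2 : Differentiable ℝ (fderiv ℝ f) :=
    (hf.fderiv_right (m := 1) (by norm_num)).differentiable (by norm_num)
  have hVf : dirDeriv V (dirDeriv V f) x = fderiv ℝ (fderiv ℝ f) x (V x) (V x) := by
    have hD := (hf2 x).hasFDerivAt.clm_apply hV.hasFDerivAt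
    have he : dirDeriv V f = fun y => fderiv ℝ f y (V y) := rfl
    rw [he, dirDeriv, hD.fderiv]
    simp [hlm.fderiv_eq_zero]
  set v := V x with hv
  have hline : ∀ τ : ℝ, HasDerivAt (fun τ : ℝ => x + τ • v) v τ := fun τ => by
    simpa using ((hasDerivAt_id τ).smul_const v).const_add x
  have h1 : deriv (fun τ : ℝ => f (x + τ • v)) = fun τ => fderiv ℝ f (x + τ • v) v :=
    funext fun τ => ((hf1 _).hasFDerivAt.comp_hasDerivAt τ (hline τ)).deriv
  have h2 : deriv (fun τ : ℝ => fderiv ℝ f (x + τ • v) v) 0 = fderiv ℝ (fderiv ℝ f) x v v := by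
    have hx : HasFDerivAt (fderiv ℝ f) (fderiv ℝ (fderiv ℝ f) x) (x + (0 : ℝ) • v) := by
      simpa using (hf2 x).hasFDerivAt
    have hD : HasDerivAt (fun τ : ℝ => fderiv ℝ f (x + τ • v)) (fderiv ℝ (fderiv ℝ f) x v) 0 :=
      hx.comp_hasDerivAt (0 : ℝ) (hline 0)
    have hE := hD.clm_apply (hasDerivAt_const (0 : ℝ) v)
    rw [hE.deriv]
    simp
  have hh : IsLocalMin (fun τ : ℝ => f (x + τ • v)) 0 :=
    Filter.Eventually.of_forall fun τ => by simpa using hmin (x + τ • v)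
  have h3 := deriv_deriv_nonneg_of_isLocalMin
    ((hf1 _).hasFDerivAt.comp_hasDerivAt 0 (hline 0)).continuousAt hh
  rw [hVf, ← h2, ← h1]
  exact h3

lemma deriv_nonpos_of_left_min {g : ℝ → ℝ} {g' s t : ℝ} (hst : s < t) (hg : HasDerivAt g g' t)
    (hmin : ∀ τ ∈ Icc s t, g t ≤ g τ) : g' ≤ 0 := by
  have h := (hasDerivWithinAt_iff_tendsto_slope' (s := Iio t) (by simp)).1 hg.hasDerivWithinAt
  refine le_of_tendsto h ?_
  filter_upwards [Ioo_mem_nhdsLT hst] with τ hτ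
  rw [slope_def_field]
  exact div_nonpos_of_nonneg_of_nonpos (by linarith [hmin τ ⟨hτ.1.le, hτ.2.le⟩])
    (by linarith [hτ.2])

/-- The product rule at a critical point of `f`. -/
lemma divG_mul_of_fderiv_eq_zero {d m : ℕ} (X : Fin m → (Fin d → ℝ) → (Fin d → ℝ))
    {b : (Fin d → ℝ) → Fin m → ℝ} {f : (Fin d → ℝ) → ℝ} {x : Fin d → ℝ}
    (hb : DifferentiableAt ℝ b x) (hf : DifferentiableAt ℝ f x) (h0 : fderiv ℝ f x = 0) :
    divG X (fun z i => b z i * f z) x = f x * divG X b x := by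
  unfold divG dirDeriv
  rw [Finset.mul_sum]
  refine Finset.sum_congr rfl fun i _ => ?_
  have hbi : DifferentiableAt ℝ (fun y => b y i) x := differentiableAt_pi.1 hb i
  rw [fderiv_fun_mul hbi hf, h0]
  simp

/-- Preservation of nonnegativity for compactly supported classical solutions of the
subelliptic Fokker-Planck equation (with bounded horizontal divergence of the drift). -/
theorem fokker_planck_nonnegativity
    {d m : ℕ} (hd : 1 ≤ d) (hm : 1 ≤ m)
    (X : Fin m → (Fin d → ℝ) → (Fin d → ℝ))
    (hXsmooth : ∀ i, ContDiff ℝ (⊤ : ℕ∞) (X i))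
    (hXdiv : ∀ i x, divE (X i) x = 0)
    (s T : ℝ) (hsT : s < T)
    (β : ℝ → (Fin d → ℝ) → Fin m → ℝ)
    (hβcont : ContinuousOn (fun p : ℝ × (Fin d → ℝ) => β p.1 p.2) (Icc s T ×ˢ univ))
    (hβC1 : ∀ t ∈ Icc s T, ContDiff ℝ 1 (fun y => β t y))
    (hβdivbdd : ∃ C : ℝ, ∀ t ∈ Icc s T, ∀ y, |divG X (fun z => β t z) y| ≤ C)
    (ρ : ℝ → (Fin d → ℝ) → ℝ)
    (hρcont : ContinuousOn (fun p : ℝ × (Fin d → ℝ) => ρ p.1 p.2) (Icc s T ×ˢ univ))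
    (hρC2 : ∀ t ∈ Ioc s T, ContDiff ℝ 2 (ρ t))
    (hρtC : ContinuousOn (fun p : ℝ × (Fin d → ℝ) => deriv (fun τ => ρ τ p.2) p.1)
      (Ioc s T ×ˢ univ))
    (K : Set (Fin d → ℝ)) (hK : IsCompact K)
    (hsupp : ∀ t ∈ Icc s T, ∀ y ∉ K, ρ t y = 0)
    (hpde : ∀ t ∈ Ioc s T, ∀ y, HasDerivAt (fun τ => ρ τ y)
      (deltaG X (ρ t) y + divG X (fun z i => β t z i * ρ t z) y) t)
    (hinit : ∀ y, 0 ≤ ρ s y) :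
    ∀ t ∈ Icc s T, ∀ y, 0 ≤ ρ t y := by
  obtain ⟨C, hC⟩ := hβdivbdd
  intro t₀ ht₀ y₀
  by_contra! hneg
  have hy₀ : y₀ ∈ K := by
    by_contra h
    exact hneg.ne (hsupp t₀ ht₀ y₀ h)
  have hucont : ContinuousOn (fun p : ℝ × (Fin d → ℝ) => Real.exp (-(C + 1) * p.1) * ρ p.1 p.2)
      (Icc s T ×ˢ K) :=
    ContinuousOn.mul (by fun_prop) (hρcont.mono (prod_mono le_rfl (subset_univ K)))
  obtain ⟨⟨t₁, y₁⟩, ⟨ht₁, -⟩, hmin⟩ :=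
    (isCompact_Icc.prod hK).exists_isMinOn ⟨(t₀, y₀), ht₀, hy₀⟩ hucont
  simp only at ht₁
  have hmin' : ∀ t ∈ Icc s T, ∀ y ∈ K,
      Real.exp (-(C + 1) * t₁) * ρ t₁ y₁ ≤ Real.exp (-(C + 1) * t) * ρ t y :=
    fun t ht y hy => hmin (show (t, y) ∈ Icc s T ×ˢ K from ⟨ht, hy⟩)
  have hneg₁ : ρ t₁ y₁ < 0 := by
    have h1 := hmin' t₀ ht₀ y₀ hy₀
    have h2 := mul_neg_of_pos_of_neg (Real.exp_pos (-(C + 1) * t₀)) hneg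
    by_contra! h3
    have h4 := mul_nonneg (Real.exp_pos (-(C + 1) * t₁)).le h3
    linarith
  have hst₁ : s < t₁ := by
    refine lt_of_le_of_ne ht₁.1 fun h => ?_
    rw [← h] at hneg₁
    exact absurd (hinit y₁) (not_le.2 hneg₁)
  have hy₁ : y₁ ∈ K := by
    by_contra h
    exact hneg₁.ne (hsupp t₁ ht₁ y₁ h)
  have ht₁' : t₁ ∈ Ioc s T := ⟨hst₁, ht₁.2⟩
  have hspace : ∀ y, ρ t₁ y₁ ≤ ρ t₁ y := fun y => by
    by_cases hy : y ∈ K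
    · exact le_of_mul_le_mul_left (hmin' t₁ ht₁ y hy) (Real.exp_pos _)
    · rw [hsupp t₁ ht₁ y hy]
      exact hneg₁.le
  have hC2 := hρC2 t₁ ht₁'
  have hgrad : fderiv ℝ (ρ t₁) y₁ = 0 :=
    IsLocalMin.fderiv_eq_zero (Filter.Eventually.of_forall hspace)
  have hlap : 0 ≤ deltaG X (ρ t₁) y₁ := Finset.sum_nonneg fun i _ =>
    dirDeriv_dirDeriv_nonneg ((hXsmooth i).differentiable (by simp) y₁) hC2 hspace
  have hdrift := divG_mul_of_fderiv_eq_zero X ((hβC1 t₁ ht₁).differentiable (by norm_num) y₁)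
    (hC2.differentiable (by norm_num) y₁) hgrad
  have hdt := hpde t₁ ht₁' y₁
  rw [hdrift] at hdt
  have hexp : HasDerivAt (fun τ : ℝ => Real.exp (-(C + 1) * τ))
      (Real.exp (-(C + 1) * t₁) * (-(C + 1))) t₁ := by
    simpa using ((hasDerivAt_id t₁).const_mul (-(C + 1))).exp
  have htime := deriv_nonpos_of_left_min hst₁ (hexp.mul hdt)
    fun τ hτ => hmin' τ ⟨hτ.1, hτ.2.trans ht₁.2⟩ y₁ hy₁
  have hdiv := (abs_le.1 (hC t₁ ht₁ y₁)).2
  have hpos : 0 < ρ t₁ y₁ * (divG X (fun z => β t₁ z) y₁ - (C + 1)) :=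
    mul_pos_of_neg_of_neg hneg₁ (by linarith)
  have hfinal := mul_pos (Real.exp_pos (-(C + 1) * t₁)) (add_pos_of_nonneg_of_pos hlap hpos)
  linarith
end
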